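/- Assume s = 2, p ∤ (m/t), d | h, and a ≠ 0. Then: if (d,l) = (1,1) then N_t = (1/2)·( q^{t−1} + (−1)^h·q^{(t−1)/2}·ρ((−1)^{(t−1)/2}·(m/(t·a))) ), where m/(t·a) denotes (m/t mod p)·a^{−1} in F_q^*; if (d,l) = (1,2) then N_t = (1/2)·( q^{t−1} + (−1)^h·q^{(t−2)/2}·ρ((−1)^{t/2}) ); if (d,l) = (2,1) then N_t = q^{t−1}. -/

import Mathlib

noncomputable section

open Complex Polynomial Classical

/-- `N_t(a,s,h)`: the number of elements `x` of the subfield `F_{q^t}` of `K = F_{q^m}`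
with `Tr_{K/F}(x) = a` and `N_{K/F}(x) ∈ g^h·⟨g^s⟩`. -/
def NN (F K : Type*) [Field F] [Fintype F] [Field K] [Fintype K] [Algebra F K]
    (g : F) (s h t : ℕ) (a : F) : ℕ :=
  Nat.card {x : K // x ^ (Fintype.card F) ^ t = x ∧ Algebra.trace F K x = a ∧
    ∃ k : ℕ, Algebra.norm F x = g ^ (h + s * k)}

/-!
Let `q = #F`, `E = F_{q^t}`, `n = m / t`, and let `ρ_E` be the quadratic character of `E`. By
transitivity, `y : E` has trace `n • Tr_{E/F} y` and norm `(N_{E/F} y) ^ n` from `K` to `F`, while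
`ρ ∘ N_{E/F} = ρ_E`; so one counts the `y` with `Tr_{E/F} y = a / n` and `ρ_E(y) ^ n = (-1) ^ h`.
For even `n` the exponent `h` is even too and the last condition holds. For odd `n` its indicator is
`(1 + (-1) ^ h * ρ_E(y)) / 2`, and what is needed is the sum `S(b)` of `ρ_E` over the elements of
trace `b = a / n`.

Scaling by `c ∈ F` gives `S(c * b) = ρ(c) ^ t * S(b)`, and `∑ b, S(b) * ψ(b)` is the quadratic Gauss
sum of `ψ ∘ Tr_{E/F}`, so `S` is determined once this Gauss sum is known. Diagonalising the trace
form shows that it equals `ρ(disc) * G ^ t`, with `G` the quadratic Gauss sum of `ψ` on `F`. Finally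
`disc = D ^ 2` for the determinant `D` of a Moore matrix. Frobenius permutes the columns of that
matrix cyclically, so `D ^ q = (-1) ^ (t - 1) * D`, and Euler's criterion yields
`ρ(disc) = D ^ (q - 1) = (-1) ^ (t - 1)`.
-/

section GaussSum

variable {F R : Type*} [Field F] [Fintype F] [DecidableEq F] [CommRing R]

theorem addChar_sum_eq_prod {A M ι : Type*} [AddCommMonoid A] [CommMonoid M] (ψ : AddChar A M)
    (s : Finset ι) (f : ι → A) : ψ (∑ i ∈ s, f i) = ∏ i ∈ s, ψ (f i) :=
  map_prod ψ.toMonoidHom (fun i => Multiplicative.ofAdd (f i)) s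

theorem sum_comp_sq (hF : ringChar F ≠ 2) (f : F → R) :
    ∑ y, f (y ^ 2) = ∑ u, (1 + (quadraticChar F u : R)) * f u := by
  rw [← Finset.sum_fiberwise Finset.univ (fun y : F => y ^ 2)]
  refine Finset.sum_congr rfl fun u _ => ?_
  have hcard := quadraticChar_card_sqrts hF u
  rw [Set.toFinset_ofPred] at hcard
  rw [Finset.sum_congr rfl fun y hy => congrArg f (Finset.mem_filter.mp hy).2, Finset.sum_const,
    nsmul_eq_mul, ← Int.cast_natCast, hcard]
  push_cast
  ring

/-- The Gauss sum `∑ u, ρ(u) ψ(u)` of the quadratic character `ρ` of `F`, with `ρ` taking its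
values in the target ring of the additive character `ψ`. -/
def quadraticGaussSum (ψ : AddChar F R) : R :=
  gaussSum ((quadraticChar F).ringHomComp (Int.castRingHom R)) ψ

theorem sum_quadraticChar_mul (ψ : AddChar F R) :
    ∑ u, (quadraticChar F u : R) * ψ u = quadraticGaussSum ψ := rfl

variable [IsDomain R] {ψ : AddChar F R}

theorem sum_addChar_mul_sq (hF : ringChar F ≠ 2) (hψ : ψ ≠ 1) {c : F} (hc : c ≠ 0) :
    ∑ y, ψ (c * y ^ 2) = quadraticChar F c * quadraticGaussSum ψ := by
  have hshift : ψ.mulShift c ≠ 1 := AddChar.IsPrimitive.of_ne_one hψ hc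
  have hgauss := gaussSum_mulShift_eq ((quadraticChar F).ringHomComp (Int.castRingHom R)) ψ
    (Units.mk0 c hc)
  rw [((quadraticChar_isQuadratic F).comp _).inv] at hgauss
  calc ∑ y, ψ (c * y ^ 2)
      = ∑ u, ψ.mulShift c u + quadraticGaussSum (ψ.mulShift c) := by
        simp only [sum_comp_sq hF (fun u => ψ (c * u)), add_mul, one_mul, Finset.sum_add_distrib,
          ← sum_quadraticChar_mul, AddChar.mulShift_apply]
    _ = quadraticChar F c * quadraticGaussSum ψ := by
        rw [AddChar.sum_eq_zero_of_ne_one hshift, zero_add]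
        exact hgauss

theorem sum_addChar_weightedSumSquares {ι : Type*} [Fintype ι] [DecidableEq ι]
    (hF : ringChar F ≠ 2) (hψ : ψ ≠ 1) {c : ι → F} (hc : ∀ i, c i ≠ 0) :
    ∑ y, ψ (QuadraticMap.weightedSumSquares F c y) =
      quadraticChar F (∏ i, c i) * quadraticGaussSum ψ ^ Fintype.card ι := by
  calc ∑ y, ψ (QuadraticMap.weightedSumSquares F c y)
      = ∑ y : ι → F, ∏ i, ψ (c i * y i ^ 2) := by
        simp only [QuadraticMap.weightedSumSquares_apply, addChar_sum_eq_prod, smul_eq_mul,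
          pow_two]
    _ = ∏ i, ∑ z, ψ (c i * z ^ 2) := (Fintype.prod_sum fun i z => ψ (c i * z ^ 2)).symm
    _ = ∏ i, ((quadraticChar F (c i) : R) * quadraticGaussSum ψ) :=
        Finset.prod_congr rfl fun i _ => sum_addChar_mul_sq hF hψ (hc i)
    _ = quadraticChar F (∏ i, c i) * quadraticGaussSum ψ ^ Fintype.card ι := by
        rw [Finset.prod_mul_distrib, Finset.prod_const, Finset.card_univ, map_prod, Int.cast_prod]

variable [CharZero R]

theorem quadraticGaussSum_sq (hF : ringChar F ≠ 2) (hψ : ψ ≠ 1) :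
    quadraticGaussSum ψ ^ 2 = quadraticChar F (-1) * Fintype.card F :=
  gaussSum_sq ((MulChar.ringHomComp_ne_one_iff Int.cast_injective).2 (quadraticChar_ne_one hF))
    ((quadraticChar_isQuadratic F).comp _) (AddChar.IsPrimitive.of_ne_one hψ)

theorem quadraticGaussSum_pow_two_mul (hF : ringChar F ≠ 2) (hψ : ψ ≠ 1) (k : ℕ) :
    quadraticGaussSum ψ ^ (2 * k) =
      ((quadraticChar F ((-1) ^ k) * Fintype.card F ^ k : ℤ) : R) := by
  rw [pow_mul, quadraticGaussSum_sq hF hψ, mul_pow, map_pow]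
  push_cast
  rfl

theorem quadraticGaussSum_ne_zero (hF : ringChar F ≠ 2) (hψ : ψ ≠ 1) :
    quadraticGaussSum ψ ≠ 0 := by
  rw [← pow_ne_zero_iff two_ne_zero, quadraticGaussSum_sq hF hψ]
  refine mul_ne_zero (Int.cast_ne_zero.2 ?_) (Nat.cast_ne_zero.2 Fintype.card_ne_zero)
  exact quadraticChar_eq_zero_iff.not.2 (neg_ne_zero.2 one_ne_zero)

end GaussSum

section Extension

variable {F E : Type*} [Field F] [Fintype F] [Field E] [Fintype E] [Algebra F E]

theorem card_div_two_of_finite_extension (hF : ringChar F ≠ 2) :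
    (Fintype.card E - 1) / (Fintype.card F - 1) * (Fintype.card F / 2) = Fintype.card E / 2 := by
  have hE : ringChar E ≠ 2 := by rwa [← Algebra.ringChar_eq F E]
  have hF_odd := FiniteField.odd_card_of_char_ne_two hF
  have hE_odd := FiniteField.odd_card_of_char_ne_two hE
  have hdvd : Fintype.card F - 1 ∣ Fintype.card E - 1 := by
    rw [Module.card_eq_pow_finrank (K := F) (V := E)]
    simpa using Nat.sub_dvd_pow_sub_pow (Fintype.card F) 1 (Module.finrank F E)
  have hF2 : Fintype.card F - 1 = 2 * (Fintype.card F / 2) := by omega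
  rw [← Nat.mul_left_cancel_iff two_pos, mul_left_comm, ← hF2, Nat.div_mul_cancel hdvd]
  omega

variable [DecidableEq F] [DecidableEq E]

theorem quadraticChar_norm (hF : ringChar F ≠ 2) (x : E) :
    quadraticChar F (Algebra.norm F x) = quadraticChar E x := by
  have hE : ringChar E ≠ 2 := by rwa [← Algebra.ringChar_eq F E]
  refine (quadraticChar_isQuadratic F).eq_of_eq_coe (quadraticChar_isQuadratic E) hE ?_
  rw [quadraticChar_eq_pow_of_char_ne_two' hE, ← map_intCast (algebraMap F E),
    quadraticChar_eq_pow_of_char_ne_two' hF, map_pow, FiniteField.algebraMap_norm_eq_pow, ← pow_mul,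
    Nat.card_eq_fintype_card, Nat.card_eq_fintype_card, card_div_two_of_finite_extension hF]

theorem quadraticChar_algebraMap (hF : ringChar F ≠ 2) (c : F) :
    quadraticChar E (algebraMap F E c) = quadraticChar F c ^ Module.finrank F E := by
  rw [← quadraticChar_norm (F := F) hF, Algebra.norm_algebraMap, map_pow]

end Extension

section Discriminant

variable (F : Type*) {E : Type*} [Field F] [Fintype F] [Field E] [Algebra F E]

/-- The Moore matrix `(x_i ^ (q ^ j))` of a tuple of elements of an extension of a finite field
with `q` elements. Its determinant serves as a square root of the discriminant. -/
def mooreMatrix {n : ℕ} (x : Fin n → E) : Matrix (Fin n) (Fin n) E :=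
  Matrix.of fun i j => x i ^ Fintype.card F ^ (j : ℕ)

variable [Finite E]

theorem algebraMap_discr_eq_det_mooreMatrix_sq (x : Fin (Module.finrank F E) → E) :
    algebraMap F E (Algebra.discr F x) = (mooreMatrix F x).det ^ 2 := by
  have hM : (algebraMap F E).mapMatrix (Algebra.traceMatrix F x) =
      mooreMatrix F x * (mooreMatrix F x).transpose := by
    ext i j
    simp only [RingHom.mapMatrix_apply, Matrix.map_apply, Algebra.traceMatrix_apply,
      Algebra.traceForm_apply, FiniteField.algebraMap_trace_eq_sum_pow, Nat.card_eq_fintype_card,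
      Finset.sum_range, mul_pow, Matrix.mul_apply, Matrix.transpose_apply, mooreMatrix,
      Matrix.of_apply]
  rw [Algebra.discr_def, RingHom.map_det, hM, Matrix.det_mul, Matrix.det_transpose, pow_two]

theorem mooreMatrix_pow_card (x : Fin (Module.finrank F E) → E) (i j) :
    mooreMatrix F x i j ^ Fintype.card F = mooreMatrix F x i (finRotate _ j) := by
  have hpos : 0 < Module.finrank F E := Module.finrank_pos
  have hfix : x i ^ Fintype.card F ^ Module.finrank F E = x i := by
    have := Fintype.ofFinite E
    rw [← Module.card_eq_pow_finrank, FiniteField.pow_card]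
  simp only [mooreMatrix, Matrix.of_apply, ← pow_mul, ← pow_succ]
  generalize Module.finrank F E = n at *
  obtain ⟨n, rfl⟩ := Nat.exists_eq_add_one.2 hpos
  induction j using Fin.lastCases with
  | last => simpa using hfix
  | cast j => simp

theorem det_mooreMatrix_pow_card (x : Fin (Module.finrank F E) → E) :
    (mooreMatrix F x).det ^ Fintype.card F =
      (-1) ^ (Module.finrank F E - 1) * (mooreMatrix F x).det := by
  have hφ : (mooreMatrix F x).map (· ^ Fintype.card F) =
      (mooreMatrix F x).submatrix id (finRotate _) :=
    Matrix.ext (mooreMatrix_pow_card F x)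
  calc (mooreMatrix F x).det ^ Fintype.card F
      = ((mooreMatrix F x).map (· ^ Fintype.card F)).det :=
        (FiniteField.frobeniusAlgHom F E).map_det _
    _ = (-1) ^ (Module.finrank F E - 1) * (mooreMatrix F x).det := by
        rw [hφ, Matrix.det_permute', sign_finRotate]
        simp

theorem quadraticChar_discr [DecidableEq F] (hF : ringChar F ≠ 2)
    (v : Module.Basis (Fin (Module.finrank F E)) F E) :
    quadraticChar F (Algebra.discr F v) = (-1) ^ (Module.finrank F E - 1) := by
  have hdiscr := algebraMap_discr_eq_det_mooreMatrix_sq F v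
  have hD : (mooreMatrix F v).det ≠ 0 := by
    rw [← pow_ne_zero_iff two_ne_zero, ← hdiscr, _root_.map_ne_zero]
    exact Algebra.discr_not_zero_of_basis F v
  have hodd := FiniteField.odd_card_of_char_ne_two hF
  have hcard : 2 * (Fintype.card F / 2) + 1 = Fintype.card F := by omega
  have hpow : (quadraticChar F (Algebra.discr F v) : F) =
      (((-1) ^ (Module.finrank F E - 1) : ℤ) : F) := by
    apply (algebraMap F E).injective
    rw [quadraticChar_eq_pow_of_char_ne_two' hF, map_pow, hdiscr, ← pow_mul]
    apply mul_right_cancel₀ hD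
    rw [← pow_succ, hcard, det_mooreMatrix_pow_card]
    simp
  refine Int.cast_injOn_of_ringChar_ne_two hF (quadraticChar_isQuadratic F _) ?_ hpow
  rcases neg_one_pow_eq_or ℤ (Module.finrank F E - 1) with h | h <;> simp [h]

end Discriminant

section HasseDavenport

variable {F E R : Type*} [Field F] [Field E] [Algebra F E]

theorem trace_equivFun_symm_sq {ι : Type*} [Fintype ι] {v : Module.Basis ι F E}
    (hv : (Algebra.traceForm F E).IsOrthoᵢ v) (y : ι → F) :
    Algebra.trace F E (v.equivFun.symm y ^ 2) =
      QuadraticMap.weightedSumSquares F (fun i => Algebra.trace F E (v i ^ 2)) y := by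
  rw [Module.Basis.equivFun_symm_apply, pow_two, Finset.sum_mul_sum, map_sum,
    QuadraticMap.weightedSumSquares_apply]
  refine Finset.sum_congr rfl fun i _ => ?_
  rw [map_sum, Finset.sum_eq_single i]
  · rw [smul_mul_smul_comm, map_smul, smul_eq_mul, smul_eq_mul, pow_two, mul_comm]
  · intro j _ hj
    have hij : Algebra.trace F E (v i * v j) = 0 := hv hj.symm
    rw [smul_mul_smul_comm, map_smul, hij, smul_zero]
  · simp

theorem discr_eq_prod_of_isOrtho {ι : Type*} [Fintype ι] [DecidableEq ι] {v : ι → E}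
    (hv : (Algebra.traceForm F E).IsOrthoᵢ v) :
    Algebra.discr F v = ∏ i, Algebra.trace F E (v i ^ 2) := by
  have hdiag : Algebra.traceMatrix F v = Matrix.diagonal fun i => Algebra.trace F E (v i ^ 2) := by
    ext i j
    rw [Algebra.traceMatrix_apply, Matrix.diagonal_apply]
    split_ifs with hij
    · rw [← hij, Algebra.traceForm_apply, pow_two]
    · exact hv hij
  rw [Algebra.discr_def, hdiag, Matrix.det_diagonal]

variable [Fintype F] [DecidableEq F] [Fintype E] [DecidableEq E] [CommRing R] [IsDomain R]

theorem quadraticGaussSum_comp_trace (hF : ringChar F ≠ 2) {ψ : AddChar F R} (hψ : ψ ≠ 1) :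
    quadraticGaussSum (ψ.compAddMonoidHom (Algebra.trace F E).toAddMonoidHom) =
      (-1) ^ (Module.finrank F E - 1) * quadraticGaussSum ψ ^ Module.finrank F E := by
  set ψE : AddChar E R := ψ.compAddMonoidHom (Algebra.trace F E).toAddMonoidHom
  have hE : ringChar E ≠ 2 := by rwa [← Algebra.ringChar_eq F E]
  have hψE_ne : ψE ≠ 1 := by
    obtain ⟨b, hb⟩ := AddChar.ne_one_iff.1 hψ
    obtain ⟨x, rfl⟩ := Algebra.trace_surjective F E b
    exact AddChar.ne_one_iff.2 ⟨x, hb⟩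
  have : Invertible (2 : F) := invertibleOfNonzero (Ring.two_ne_zero hF)
  have hsymm : LinearMap.IsSymm (Algebra.traceForm F E) :=
    ⟨fun x y => by simp [Algebra.traceForm_apply, mul_comm]⟩
  obtain ⟨v, hv⟩ := LinearMap.BilinForm.exists_orthogonal_basis hsymm
  have hdiscr := discr_eq_prod_of_isOrtho hv
  have hne : ∀ i, Algebra.trace F E (v i ^ 2) ≠ 0 := by
    have hprod := Algebra.discr_not_zero_of_basis F v
    rw [hdiscr, Finset.prod_ne_zero_iff] at hprod
    exact fun i => hprod i (Finset.mem_univ i)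
  calc quadraticGaussSum ψE
      = ∑ x : E, ψ (Algebra.trace F E (x ^ 2)) := by
        simpa [ψE] using (sum_addChar_mul_sq hE hψE_ne one_ne_zero).symm
    _ = ∑ y, ψ (QuadraticMap.weightedSumSquares F (fun i => Algebra.trace F E (v i ^ 2)) y) := by
        simp only [← trace_equivFun_symm_sq hv]
        exact (v.equivFun.symm.toEquiv.sum_comp _).symm
    _ = (-1) ^ (Module.finrank F E - 1) * quadraticGaussSum ψ ^ Module.finrank F E := by
        rw [sum_addChar_weightedSumSquares hF hψ hne, ← hdiscr, quadraticChar_discr F hF,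
          Fintype.card_fin]
        push_cast
        rfl

end HasseDavenport

theorem exists_addChar_ne_one (A : Type*) [AddCommGroup A] [Finite A] [Nontrivial A] :
    ∃ ψ : AddChar A ℂ, ψ ≠ 1 := by
  obtain ⟨a, ha⟩ := exists_ne (0 : A)
  obtain ⟨ψ, hψ⟩ := AddChar.exists_apply_ne_zero.2 ha
  exact ⟨ψ, AddChar.ne_one_iff.2 ⟨a, hψ⟩⟩

section TraceFiber

variable {F : Type*} [Field F] [Fintype F] [DecidableEq F]

theorem quadraticChar_pow_of_odd {n : ℕ} (hn : Odd n) (c : F) :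
    quadraticChar F c ^ n = quadraticChar F c := by
  rcases quadraticChar_isQuadratic F c with h | h | h <;> simp [h, hn.pos.ne', hn.neg_one_pow]

theorem quadraticChar_pow_of_even {n : ℕ} (hn : Even n) {c : F} (hc : c ≠ 0) :
    quadraticChar F c ^ n = 1 := by
  obtain ⟨k, rfl⟩ := even_iff_two_dvd.1 hn
  rw [pow_mul, quadraticChar_sq_one hc, one_pow]

variable (E : Type*) [Field E] [Fintype E] [DecidableEq E] [Algebra F E]

/-- The sum of the quadratic character of `E` over the elements of `E` of trace `b`. -/
def traceFiberCharSum (b : F) : ℤ :=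
  ∑ x : E with Algebra.trace F E x = b, quadraticChar E x

variable {E}

theorem traceFiberCharSum_mul (hF : ringChar F ≠ 2) {c : F} (hc : c ≠ 0) (b : F) :
    traceFiberCharSum E (c * b) =
      quadraticChar F c ^ Module.finrank F E * traceFiberCharSum E b := by
  have hc' : algebraMap F E c ≠ 0 := (_root_.map_ne_zero _).2 hc
  have htrace (x : E) : Algebra.trace F E (algebraMap F E c * x) = c * Algebra.trace F E x := by
    rw [← Algebra.smul_def, map_smul, smul_eq_mul]
  simp only [traceFiberCharSum, Finset.sum_filter]
  rw [Finset.mul_sum, ← (mulLeft_bijective₀ _ hc').sum_comp]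
  simp only [htrace, mul_right_inj' hc, map_mul, quadraticChar_algebraMap hF, mul_ite, mul_zero]

theorem sum_traceFiberCharSum (hE : ringChar E ≠ 2) :
    ∑ b : F, traceFiberCharSum E b = 0 := by
  rw [← quadraticChar_sum_zero hE]
  exact Finset.sum_fiberwise _ _ _

theorem sum_traceFiberCharSum_mul {R : Type*} [CommRing R] (ψ : AddChar F R) :
    ∑ b, (traceFiberCharSum E b : R) * ψ b =
      quadraticGaussSum (ψ.compAddMonoidHom (Algebra.trace F E).toAddMonoidHom) := by
  rw [← sum_quadraticChar_mul, ← Finset.sum_fiberwise Finset.univ (Algebra.trace F E)]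
  refine Finset.sum_congr rfl fun b _ => ?_
  rw [traceFiberCharSum, Int.cast_sum, Finset.sum_mul]
  refine Finset.sum_congr rfl fun x hx => ?_
  rw [← (Finset.mem_filter.1 hx).2]
  rfl

theorem traceFiberCharSum_eq_mul_one_of_odd (hF : ringChar F ≠ 2)
    (hn : Odd (Module.finrank F E)) (b : F) :
    traceFiberCharSum E b = quadraticChar F b * traceFiberCharSum E (1 : F) := by
  by_cases hb : b = 0
  · obtain ⟨u, hu⟩ := quadraticChar_exists_neg_one' hF
    have hneg := traceFiberCharSum_mul (E := E) hF u.ne_zero 0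
    rw [mul_zero, hu, hn.neg_one_pow] at hneg
    rw [hb, quadraticChar_zero]
    lia
  · have h := traceFiberCharSum_mul (E := E) hF hb 1
    rwa [mul_one, quadraticChar_pow_of_odd hn] at h

theorem traceFiberCharSum_one_of_odd (hF : ringChar F ≠ 2) {k : ℕ}
    (hk : Module.finrank F E = 2 * k + 1) :
    traceFiberCharSum E (1 : F) = quadraticChar F ((-1) ^ k) * Fintype.card F ^ k := by
  obtain ⟨ψ, hψ⟩ := exists_addChar_ne_one F
  apply Int.cast_injective (α := ℂ)
  apply mul_right_cancel₀ (quadraticGaussSum_ne_zero hF hψ)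
  calc (traceFiberCharSum E (1 : F) : ℂ) * quadraticGaussSum ψ
      = ∑ c, (traceFiberCharSum E c : ℂ) * ψ c := by
        rw [← sum_quadraticChar_mul, Finset.mul_sum]
        refine Finset.sum_congr rfl fun c _ => ?_
        rw [traceFiberCharSum_eq_mul_one_of_odd hF ⟨k, hk⟩ c, Int.cast_mul]
        ring
    _ = quadraticGaussSum ψ ^ (2 * k) * quadraticGaussSum ψ := by
        rw [sum_traceFiberCharSum_mul, quadraticGaussSum_comp_trace hF hψ, hk,
          Nat.add_sub_cancel, (even_two_mul k).neg_one_pow, one_mul, pow_succ]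
    _ = _ := by rw [quadraticGaussSum_pow_two_mul hF hψ]

theorem traceFiberCharSum_of_odd (hF : ringChar F ≠ 2) (hn : Odd (Module.finrank F E)) (b : F) :
    traceFiberCharSum E b =
      Fintype.card F ^ ((Module.finrank F E - 1) / 2) *
        quadraticChar F ((-1) ^ ((Module.finrank F E - 1) / 2) * b) := by
  rw [traceFiberCharSum_eq_mul_one_of_odd hF hn]
  obtain ⟨k, hk⟩ := hn
  rw [traceFiberCharSum_one_of_odd hF hk, hk, Nat.add_sub_cancel,
    Nat.mul_div_cancel_left k two_pos, map_mul]
  ring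

omit [Fintype F] in
theorem traceFiberCharSum_eq_of_even [Finite F] (hF : ringChar F ≠ 2)
    (hn : Even (Module.finrank F E)) {b c : F} (hb : b ≠ 0) (hc : c ≠ 0) :
    traceFiberCharSum E c = traceFiberCharSum E b := by
  have := Fintype.ofFinite F
  have h := traceFiberCharSum_mul (E := E) hF (div_ne_zero hc hb) b
  rwa [div_mul_cancel₀ c hb, quadraticChar_pow_of_even hn (div_ne_zero hc hb), one_mul] at h

theorem sum_traceFiberCharSum_mul_of_even (hF : ringChar F ≠ 2) (hn : Even (Module.finrank F E))
    {b : F} (hb : b ≠ 0) {R : Type*} [CommRing R] [IsDomain R] {ψ : AddChar F R} (hψ : ψ ≠ 1) :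
    ∑ c, (traceFiberCharSum E c : R) * ψ c = -(Fintype.card F * traceFiberCharSum E b) := by
  have hE : ringChar E ≠ 2 := by rwa [← Algebra.ringChar_eq F E]
  have hdiff (f : F → R) (hf : f 0 = 1) : ∑ c, (traceFiberCharSum E c : R) * f c =
      traceFiberCharSum E (0 : F) - traceFiberCharSum E b + traceFiberCharSum E b * ∑ c, f c := by
    rw [← sub_eq_iff_eq_add, Finset.mul_sum, ← Finset.sum_sub_distrib, Fintype.sum_eq_single 0]
    · rw [hf, mul_one, mul_one]
    · intro c hc
      rw [traceFiberCharSum_eq_of_even hF hn hb hc, sub_self]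
  have hzero := hdiff (fun _ => 1) rfl
  have htotal : ∑ c : F, (traceFiberCharSum E c : R) = 0 :=
    mod_cast congrArg (Int.cast (R := R)) (sum_traceFiberCharSum (F := F) hE)
  simp only [mul_one, htotal, Finset.sum_const, Finset.card_univ, nsmul_eq_mul] at hzero
  rw [hdiff ψ ψ.map_zero_eq_one, AddChar.sum_eq_zero_of_ne_one hψ]
  linear_combination -hzero

theorem traceFiberCharSum_of_even (hF : ringChar F ≠ 2) (hn : Even (Module.finrank F E)) {b : F}
    (hb : b ≠ 0) :
    traceFiberCharSum E b =
      Fintype.card F ^ ((Module.finrank F E - 2) / 2) *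
        quadraticChar F ((-1) ^ (Module.finrank F E / 2)) := by
  obtain ⟨ψ, hψ⟩ := exists_addChar_ne_one F
  obtain ⟨k, hk⟩ : ∃ k, Module.finrank F E = 2 * (k + 1) := by
    have hpos : 0 < Module.finrank F E := Module.finrank_pos
    obtain ⟨k, hk⟩ := hn
    exact ⟨k - 1, by lia⟩
  have hgauss : Fintype.card F * traceFiberCharSum E b =
      quadraticChar F ((-1) ^ (k + 1)) * Fintype.card F ^ (k + 1) := by
    apply Int.cast_injective (α := ℂ)
    rw [← quadraticGaussSum_pow_two_mul hF hψ, ← neg_inj]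
    calc -((Fintype.card F * traceFiberCharSum E b : ℤ) : ℂ)
        = ∑ c, (traceFiberCharSum E c : ℂ) * ψ c := by
          rw [sum_traceFiberCharSum_mul_of_even hF hn hb hψ]
          push_cast
          rfl
      _ = -quadraticGaussSum ψ ^ (2 * (k + 1)) := by
          rw [sum_traceFiberCharSum_mul, quadraticGaussSum_comp_trace hF hψ, hk,
            Odd.neg_one_pow ⟨k, by lia⟩, neg_one_mul]
  apply mul_left_cancel₀ (Nat.cast_ne_zero.2 Fintype.card_ne_zero : (Fintype.card F : ℤ) ≠ 0)
  rw [hgauss, hk, show (2 * (k + 1) - 2) / 2 = k by lia, Nat.mul_div_cancel_left _ two_pos]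
  ring

end TraceFiber

section Count

theorem card_fiber_mul_card_of_surjective {A B : Type*} [AddGroup A] [AddGroup B] [Fintype A]
    [Fintype B] [DecidableEq B] {f : A →+ B} (hf : Function.Surjective f) (b : B) :
    Finset.card {x | f x = b} * Fintype.card B = Fintype.card A := by
  calc Finset.card {x | f x = b} * Fintype.card B
      = ∑ c, Finset.card {x | f x = c} := by
        rw [Finset.sum_congr rfl fun c _ => AddMonoidHom.card_fiber_eq_of_mem_range f (hf c) (hf b),
          Finset.sum_const, Finset.card_univ, smul_eq_mul, mul_comm]
    _ = Fintype.card A :=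
        (Finset.card_eq_sum_card_fiberwise fun x _ => Finset.mem_univ (f x)).symm

variable {F E : Type*} [Field F] [Fintype F] [DecidableEq F]
  [Field E] [Fintype E] [Algebra F E]

theorem card_trace_fiber (b : F) :
    Finset.card {x : E | Algebra.trace F E x = b} =
      Fintype.card F ^ (Module.finrank F E - 1) := by
  have hfiber := card_fiber_mul_card_of_surjective
    (f := (Algebra.trace F E).toAddMonoidHom) (Algebra.trace_surjective F E) b
  rw [Module.card_eq_pow_finrank (K := F) (V := E),
    ← pow_sub_one_mul Module.finrank_pos.ne' (Fintype.card F)] at hfiber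
  exact Nat.eq_of_mul_eq_mul_right Fintype.card_pos hfiber

theorem two_mul_card_trace_fiber_filter_quadraticChar [DecidableEq E] {b : F} (hb : b ≠ 0) (h : ℕ) :
    2 * (Finset.card {x : E | Algebra.trace F E x = b ∧ quadraticChar E x = (-1) ^ h} : ℤ) =
      Fintype.card F ^ (Module.finrank F E - 1) + (-1) ^ h * traceFiberCharSum E b := by
  have hindicator (x : E) (hx : Algebra.trace F E x = b) :
      2 * (if quadraticChar E x = (-1) ^ h then 1 else 0) = 1 + (-1) ^ h * quadraticChar E x := by
    have hx0 : x ≠ 0 := by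
      rintro rfl
      exact hb (hx.symm.trans (map_zero _))
    rcases quadraticChar_dichotomy hx0 with h1 | h1 <;>
      rcases neg_one_pow_eq_or ℤ h with h2 | h2 <;> simp [h1, h2]
  rw [← Finset.filter_filter, Finset.card_filter, Nat.cast_sum, Finset.mul_sum, traceFiberCharSum,
    Finset.mul_sum, ← Nat.cast_pow, ← card_trace_fiber (E := E) b, Finset.cast_card,
    ← Finset.sum_add_distrib]
  refine Finset.sum_congr rfl fun x hx => ?_
  rw [← hindicator x (Finset.mem_filter.1 hx).2]
  push_cast
  rfl

end Count

section Coset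

variable {F : Type*} [Field F] [Fintype F] [DecidableEq F]

theorem quadraticChar_generator (hF : ringChar F ≠ 2) {g : Fˣ}
    (hg : ∀ u : Fˣ, u ∈ Subgroup.zpowers g) : quadraticChar F g = -1 := by
  obtain ⟨u, hu⟩ := quadraticChar_exists_neg_one' hF
  obtain ⟨j, rfl⟩ := mem_powers_iff_mem_zpowers.2 (hg u)
  refine (quadraticChar_dichotomy g.ne_zero).resolve_left fun h1 => ?_
  simp only [Units.val_pow_eq_pow_val, map_pow, h1, one_pow] at hu
  norm_num at hu

theorem exists_eq_generator_pow_iff (hF : ringChar F ≠ 2) {g : Fˣ}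
    (hg : ∀ u : Fˣ, u ∈ Subgroup.zpowers g) (h : ℕ) {z : F} (hz : z ≠ 0) :
    (∃ k : ℕ, z = (g : F) ^ (h + 2 * k)) ↔ quadraticChar F z = (-1) ^ h := by
  have hρg := quadraticChar_generator hF hg
  constructor
  · rintro ⟨k, rfl⟩
    rw [map_pow, hρg, pow_add, (even_two_mul k).neg_one_pow, mul_one]
  · obtain ⟨j, hj⟩ := mem_powers_iff_mem_zpowers.2 (hg (Units.mk0 z hz))
    replace hj : (g : F) ^ j = z := congrArg Units.val hj
    intro hρz
    rw [← hj, map_pow, hρg] at hρz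
    obtain ⟨c, hc⟩ : ∃ c, Fintype.card F - 1 = 2 * c := by
      have := FiniteField.odd_card_of_char_ne_two hF
      exact ⟨Fintype.card F / 2, by lia⟩
    have hc0 : 1 ≤ c := by
      have := Fintype.one_lt_card (α := F)
      lia
    -- Since `g ^ (2 * c) = 1`, the exponent `j` can be raised above `h` keeping its parity.
    have hparity : ∃ k, j + 2 * c * h = h + 2 * k := by
      have hle : h ≤ c * h := Nat.le_mul_of_pos_left h hc0
      have hmod : j % 2 = h % 2 := by
        rcases Nat.even_or_odd j with hj | hj <;> rcases Nat.even_or_odd h with hh | hh <;>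
          simp_all [Odd.neg_one_pow, Nat.even_iff, Nat.odd_iff]
      rw [mul_assoc]
      exact ⟨(j + 2 * (c * h) - h) / 2, by lia⟩
    obtain ⟨k, hk⟩ := hparity
    refine ⟨k, ?_⟩
    rw [← hk, pow_add, pow_mul, ← hc, FiniteField.pow_card_sub_one_eq_one _ g.ne_zero, one_pow,
      mul_one, hj]

end Coset

section FixedField

variable (F K : Type*) [Field F] [Fintype F] [Field K] [Finite K] [Algebra F K]

/-- The fixed field of the `t`-th power of the Frobenius automorphism `x ↦ x ^ q` of `K` over `F`.
It is the subfield `F_{q^t}` of `K` when `t` divides the degree of `K` over `F`. -/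
def frobeniusFixedField (t : ℕ) : IntermediateField F K :=
  .fixedField (Subgroup.zpowers (FiniteField.frobeniusAlgEquivOfAlgebraic F K ^ t))

variable {F K}

theorem mem_frobeniusFixedField {t : ℕ} {x : K} :
    x ∈ frobeniusFixedField F K t ↔ x ^ Fintype.card F ^ t = x := by
  have hφ : (FiniteField.frobeniusAlgEquivOfAlgebraic F K ^ t) x = x ^ Fintype.card F ^ t := by
    rw [AlgEquiv.coe_pow, FiniteField.coe_frobeniusAlgEquivOfAlgebraic_iterate]
  rw [frobeniusFixedField, IntermediateField.mem_fixedField_iff, ← hφ]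
  exact Subgroup.zpowers_le (H := MulAction.stabilizer Gal(K/F) x)

theorem finrank_frobeniusFixedField {t : ℕ} (ht : t ∣ Module.finrank F K) :
    Module.finrank F (frobeniusFixedField F K t) = t := by
  have hpos : 0 < Module.finrank F K := Module.finrank_pos
  have ht0 : t ≠ 0 := ne_zero_of_dvd_ne_zero hpos.ne' ht
  have hdegree := Module.finrank_mul_finrank F (frobeniusFixedField F K t) K
  have horder := orderOf_pow_of_dvd (x := FiniteField.frobeniusAlgEquivOfAlgebraic F K) ht0
    (by rwa [FiniteField.orderOf_frobeniusAlgEquivOfAlgebraic])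
  rw [frobeniusFixedField, IntermediateField.finrank_fixedField_eq_card, Nat.card_zpowers, horder,
    FiniteField.orderOf_frobeniusAlgEquivOfAlgebraic] at hdegree
  have hindex : 0 < Module.finrank F K / t := Nat.div_pos (Nat.le_of_dvd hpos ht) ht0.bot_lt
  exact Nat.eq_of_mul_eq_mul_right hindex <| hdegree.trans (Nat.mul_div_cancel' ht).symm

end FixedField

section Tower

variable {F E K : Type*} [Field F] [Field E] [Field K] [Algebra F E] [Algebra F K] [Algebra E K]
  [IsScalarTower F E K] [FiniteDimensional F K]

theorem trace_algebraMap_of_tower (y : E) :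
    Algebra.trace F K (algebraMap E K y) = Module.finrank E K * Algebra.trace F E y := by
  have := FiniteDimensional.left F E K
  have := FiniteDimensional.right F E K
  rw [← Algebra.trace_trace (S := E), Algebra.trace_algebraMap, map_nsmul, nsmul_eq_mul]

theorem norm_algebraMap_of_tower (y : E) :
    Algebra.norm F (algebraMap E K y) = Algebra.norm F y ^ Module.finrank E K := by
  have := FiniteDimensional.left F E K
  have := FiniteDimensional.right F E K
  rw [← Algebra.norm_norm (S := E), Algebra.norm_algebraMap, map_pow]

end Tower

section TraceNormCount

variable {F : Type*} (E : Type*) [Field F] [Field E] [Algebra F E]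

/-- The number of `y : E` whose image in an extension of `E` of degree `n` has trace `a` to `F` and
norm to `F` in the coset `g ^ h ⟨g ^ s⟩`. Transitivity of trace and norm turns these conditions into
conditions on the trace and norm of `y` itself, so no such extension is mentioned. -/
def traceNormCount (n : ℕ) (g : F) (s h : ℕ) (a : F) : ℕ :=
  Nat.card {y : E // n * Algebra.trace F E y = a ∧ ∃ k, Algebra.norm F y ^ n = g ^ (h + s * k)}

variable {E} [Fintype F] [DecidableEq F] {g : Fˣ} {n h : ℕ} {a : F}

omit [Fintype F] in
theorem traceNormCount_two_eq_card [Finite F] [Fintype E] [DecidableEq E] (hF : ringChar F ≠ 2)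
    (hg : ∀ u : Fˣ, u ∈ Subgroup.zpowers g) (hn : (n : F) ≠ 0) (h : ℕ) (ha : a ≠ 0) :
    traceNormCount E n (g : F) 2 h a =
      Finset.card {y : E | Algebra.trace F E y = a / n ∧ quadraticChar E y ^ n = (-1) ^ h} := by
  have := Fintype.ofFinite F
  rw [traceNormCount, Nat.card_eq_fintype_card, Fintype.card_subtype]
  refine congrArg Finset.card (Finset.filter_congr fun y _ => ?_)
  rw [eq_div_iff hn, mul_comm]
  refine and_congr_right fun htr => ?_
  have hy : y ≠ 0 := by
    rintro rfl
    rw [map_zero, zero_mul] at htr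
    exact ha htr.symm
  have hnorm : Algebra.norm F y ≠ 0 := Algebra.norm_ne_zero_iff.2 hy
  rw [exists_eq_generator_pow_iff hF hg h (pow_ne_zero n hnorm), map_pow, quadraticChar_norm hF]

theorem two_mul_traceNormCount_two_of_odd [Fintype E] [DecidableEq E] (hF : ringChar F ≠ 2)
    (hg : ∀ u : Fˣ, u ∈ Subgroup.zpowers g) (hn : (n : F) ≠ 0) (hodd : Odd n) (h : ℕ)
    (ha : a ≠ 0) :
    2 * (traceNormCount E n (g : F) 2 h a : ℤ) =
      Fintype.card F ^ (Module.finrank F E - 1) + (-1) ^ h * traceFiberCharSum E (a / n) := by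
  simp only [traceNormCount_two_eq_card hF hg hn h ha, quadraticChar_pow_of_odd hodd,
    two_mul_card_trace_fiber_filter_quadraticChar (div_ne_zero ha hn)]

variable [Finite E]

theorem two_mul_traceNormCount_two_of_odd_of_odd (hF : ringChar F ≠ 2)
    (hg : ∀ u : Fˣ, u ∈ Subgroup.zpowers g) (hn : (n : F) ≠ 0) (hn_odd : Odd n)
    (hE : Odd (Module.finrank F E)) (h : ℕ) (ha : a ≠ 0) :
    2 * (traceNormCount E n (g : F) 2 h a : ℤ) =
      Fintype.card F ^ (Module.finrank F E - 1) +
        (-1) ^ h * Fintype.card F ^ ((Module.finrank F E - 1) / 2) *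
          quadraticChar F ((-1) ^ ((Module.finrank F E - 1) / 2) * (n * a⁻¹)) := by
  have := Fintype.ofFinite E
  have hinv : quadraticChar F (a / n) = quadraticChar F (n * a⁻¹) := by
    rw [← div_eq_mul_inv, ← inv_div, ← MulChar.inv_apply', (quadraticChar_isQuadratic F).inv]
  rw [two_mul_traceNormCount_two_of_odd hF hg hn hn_odd h ha, traceFiberCharSum_of_odd hF hE,
    map_mul, map_mul, hinv, mul_assoc]

theorem two_mul_traceNormCount_two_of_odd_of_even (hF : ringChar F ≠ 2)
    (hg : ∀ u : Fˣ, u ∈ Subgroup.zpowers g) (hn : (n : F) ≠ 0) (hn_odd : Odd n)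
    (hE : Even (Module.finrank F E)) (h : ℕ) (ha : a ≠ 0) :
    2 * (traceNormCount E n (g : F) 2 h a : ℤ) =
      Fintype.card F ^ (Module.finrank F E - 1) +
        (-1) ^ h * Fintype.card F ^ ((Module.finrank F E - 2) / 2) *
          quadraticChar F ((-1) ^ (Module.finrank F E / 2)) := by
  have := Fintype.ofFinite E
  rw [two_mul_traceNormCount_two_of_odd hF hg hn hn_odd h ha,
    traceFiberCharSum_of_even hF hE (div_ne_zero ha hn), mul_assoc]

omit [DecidableEq F] in
theorem traceNormCount_two_of_even (hF : ringChar F ≠ 2)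
    (hg : ∀ u : Fˣ, u ∈ Subgroup.zpowers g) (hn : (n : F) ≠ 0) (hn_even : Even n)
    (hh : Even h) (ha : a ≠ 0) :
    traceNormCount E n (g : F) 2 h a = Fintype.card F ^ (Module.finrank F E - 1) := by
  have := Fintype.ofFinite E
  rw [traceNormCount_two_eq_card hF hg hn h ha, ← card_trace_fiber (E := E) (a / n)]
  refine congrArg Finset.card (Finset.filter_congr fun y _ => and_iff_left_of_imp fun htr => ?_)
  rw [hh.neg_one_pow, quadraticChar_pow_of_even hn_even]
  rintro rfl
  exact div_ne_zero ha hn (htr.symm.trans (map_zero _))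

end TraceNormCount

section NN

variable {F K : Type*} [Field F] [Fintype F] [Field K] [Algebra F K] {t : ℕ}

theorem finrank_frobeniusFixedField_right [Finite K] (ht : t ∣ Module.finrank F K) :
    Module.finrank (frobeniusFixedField F K t) K = Module.finrank F K / t := by
  have ht0 : t ≠ 0 := ne_zero_of_dvd_ne_zero Module.finrank_pos.ne' ht
  rw [← Module.finrank_mul_finrank F (frobeniusFixedField F K t) K, finrank_frobeniusFixedField ht,
    Nat.mul_div_cancel_left _ ht0.bot_lt]

theorem NN_eq_traceNormCount [Fintype K] (ht : t ∣ Module.finrank F K) (g : F) (s h : ℕ) (a : F) :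
    NN F K g s h t a =
      traceNormCount (frobeniusFixedField F K t) (Module.finrank F K / t) g s h a := by
  rw [NN, traceNormCount, ← finrank_frobeniusFixedField_right ht]
  simp only [← mem_frobeniusFixedField, ← trace_algebraMap_of_tower (K := K),
    ← norm_algebraMap_of_tower (K := K)]
  exact Nat.card_congr (Equiv.subtypeSubtypeEquivSubtypeInter _ _).symm

end NN

/-- The values of `N_t` for `s = 2`, `a ≠ 0`, assuming `p ∤ m/t` and `d ∣ h`,
where `d = gcd(m/t, 2)`, `l = gcd(t, 2/d)` and `ρ` is the quadratic character of `F`. -/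
theorem stmt9 (p r m h t d l : ℕ) [Fact p.Prime] (hr : 0 < r) (hm : 2 ≤ m)
    (ht : t ∣ m) (ht0 : 0 < t)
    (F K : Type*) [Field F] [Fintype F] [DecidableEq F] [Field K] [Fintype K] [Algebra F K]
    (hF : Fintype.card F = p ^ r) (hK : Fintype.card K = Fintype.card F ^ m)
    (g : Fˣ) (hg : ∀ u : Fˣ, u ∈ Subgroup.zpowers g)
    (hsq : 2 ∣ Fintype.card F - 1) (hh : h < 2)
    (hd : d = Nat.gcd (m / t) 2) (hl : l = Nat.gcd t (2 / d))
    (hpmt : ¬ p ∣ m / t) (hdh : d ∣ h)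
    (a : F) (ha : a ≠ 0) :
    (d = 1 ∧ l = 1 →
      (NN F K (g : F) 2 h t a : ℚ) =
        (1 / 2) * ((Fintype.card F : ℚ) ^ (t - 1) +
          (-1 : ℚ) ^ h * (Fintype.card F : ℚ) ^ ((t - 1) / 2) *
            (quadraticChar F ((-1 : F) ^ ((t - 1) / 2) * (((m / t : ℕ) : F) * a⁻¹)) : ℚ))) ∧
    (d = 1 ∧ l = 2 →
      (NN F K (g : F) 2 h t a : ℚ) =
        (1 / 2) * ((Fintype.card F : ℚ) ^ (t - 1) +
          (-1 : ℚ) ^ h * (Fintype.card F : ℚ) ^ ((t - 2) / 2) *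
            (quadraticChar F ((-1 : F) ^ (t / 2)) : ℚ))) ∧
    (d = 2 ∧ l = 1 →
      (NN F K (g : F) 2 h t a : ℚ) = (Fintype.card F : ℚ) ^ (t - 1)) := by
  have hmK : Module.finrank F K = m :=
    Nat.pow_right_injective Fintype.one_lt_card (Module.card_eq_pow_finrank.symm.trans hK)
  have htK : t ∣ Module.finrank F K := hmK ▸ ht
  have hEt := finrank_frobeniusFixedField htK
  have hchar : ringChar F ≠ 2 := by
    rw [Ne, FiniteField.even_card_iff_char_two]
    have := Fintype.card_pos (α := F)
    lia
  have : CharP F p := charP_of_card_eq_prime_pow hF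
  have hn : ((m / t : ℕ) : F) ≠ 0 := (CharP.cast_eq_zero_iff F p _).not.2 hpmt
  rw [NN_eq_traceNormCount htK, hmK]
  refine ⟨?_, ?_, ?_⟩ <;> rintro ⟨rfl, rfl⟩
  · have hcount := two_mul_traceNormCount_two_of_odd_of_odd hchar hg hn
      (Nat.coprime_two_right.1 hd.symm) (hEt.symm ▸ Nat.coprime_two_right.1 hl.symm) h ha
    rw [hEt] at hcount
    qify at hcount
    linear_combination hcount / 2
  · have hcount := two_mul_traceNormCount_two_of_odd_of_even hchar hg hn
      (Nat.coprime_two_right.1 hd.symm)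
      (hEt.symm ▸ even_iff_two_dvd.2 (Nat.gcd_eq_right_iff_dvd.1 hl.symm)) h ha
    rw [hEt] at hcount
    qify at hcount
    linear_combination hcount / 2
  · have hn_even : Even (m / t) := even_iff_two_dvd.2 (Nat.gcd_eq_right_iff_dvd.1 hd.symm)
    rw [traceNormCount_two_of_even hchar hg hn hn_even (even_iff_two_dvd.2 hdh) ha, hEt,
      Nat.cast_pow]

end
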